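/- Let M be a semi-integral residuated pomonoid and write ~a := a\e (= e/a). Then ~(a\b) = ~b/~a and ~(b/a) = ~a\~b for all a, b ∈ M. -/

import Mathlib

/-- A semi-integral residuated pomonoid (sirmonoid): a partially ordered monoid with
left and right residuals, i.e. `b ≤ a\c ↔ a*b ≤ c ↔ a ≤ c/b`, in which the monoid
unit `e` is a maximal element.  `ldiv a c` denotes `a\c` and `rdiv c b` denotes `c/b`. -/
class Sirmonoid (α : Type*) extends PartialOrder α, Monoid α where
  ldiv : α → α → α
  rdiv : α → α → α
  le_ldiv_iff : ∀ a b c : α, b ≤ ldiv a c ↔ a * b ≤ c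
  le_rdiv_iff : ∀ a b c : α, a ≤ rdiv c b ↔ a * b ≤ c
  one_maximal : ∀ a : α, 1 ≤ a → a = 1

open Sirmonoid

/-!
The negation `~` takes equal values on comparable elements, because the elements below `e` form
an up-set as well as a down-set. Since `~a * a ≤ e`, the product `~a * a * (a\b)` lies below both
`a\b` and `~a * b`, so `~(a\b) = ~(~a * b)`. Finally `x * y ≤ e` is symmetric in `x` and `y`,
so residuation turns `~(~a * b)` into `~b/~a`. The other identity is dual.
-/

namespace Sirmonoid

variable {α : Type*} [Sirmonoid α]

instance : MulLeftMono α where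
  elim c _ b h := (le_ldiv_iff c _ (c * b)).1 (h.trans ((le_ldiv_iff c b (c * b)).2 le_rfl))

instance : MulRightMono α where
  elim c _ b h := (le_rdiv_iff _ c (b * c)).1 (h.trans ((le_rdiv_iff b c (b * c)).2 le_rfl))

theorem mul_ldiv_le (a b : α) : a * ldiv a b ≤ b :=
  (le_ldiv_iff _ _ _).1 le_rfl

theorem rdiv_mul_le (b a : α) : rdiv b a * a ≤ b :=
  (le_rdiv_iff _ _ _).1 le_rfl

theorem ldiv_mul (a b c : α) : ldiv (a * b) c = ldiv b (ldiv a c) :=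
  eq_of_forall_le_iff fun z ↦ by simp only [le_ldiv_iff, mul_assoc]

theorem ldiv_eq_one_of_le {a b : α} (h : a ≤ b) : ldiv a b = 1 :=
  one_maximal _ ((le_ldiv_iff _ _ _).2 (by rwa [mul_one]))

theorem rdiv_eq_one_of_le {a b : α} (h : a ≤ b) : rdiv b a = 1 :=
  one_maximal _ ((le_rdiv_iff _ _ _).2 (by rwa [one_mul]))

theorem le_one_iff_of_le {a b : α} (h : a ≤ b) : a ≤ 1 ↔ b ≤ 1 := by
  refine ⟨fun ha ↦ ?_, h.trans⟩
  calc
    b ≤ rdiv b a := (le_rdiv_iff _ _ _).2 (mul_le_of_le_one_right' ha)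
    _ = 1 := rdiv_eq_one_of_le h

theorem mul_le_one_symm {a b : α} (h : a * b ≤ 1) : b * a ≤ 1 := by
  have hab : a * (b * a) ≤ a := by
    rw [← mul_assoc]
    exact mul_le_of_le_one_left' h
  calc
    b * a ≤ ldiv a a := (le_ldiv_iff _ _ _).2 hab
    _ = 1 := ldiv_eq_one_of_le le_rfl

theorem mul_le_one_comm {a b : α} : a * b ≤ 1 ↔ b * a ≤ 1 :=
  ⟨mul_le_one_symm, mul_le_one_symm⟩

/-- The negation `~a = a\e` of a sirmonoid, encoded by the left residual; it also equals `e/a`. -/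
def neg (a : α) : α := ldiv a 1

theorem le_neg_iff {a b : α} : b ≤ neg a ↔ a * b ≤ 1 :=
  le_ldiv_iff _ _ _

theorem mul_neg_le_one (a : α) : a * neg a ≤ 1 :=
  mul_ldiv_le a 1

theorem neg_mul_le_one (a : α) : neg a * a ≤ 1 :=
  mul_le_one_symm (mul_neg_le_one a)

theorem neg_eq_of_le {a b : α} (h : a ≤ b) : neg a = neg b :=
  eq_of_forall_le_iff fun z ↦ by
    rw [le_neg_iff, le_neg_iff, le_one_iff_of_le (mul_le_mul_left h z)]

theorem neg_mul_eq_ldiv (a b : α) : neg (a * b) = ldiv b (neg a) :=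
  ldiv_mul a b 1

theorem neg_mul_eq_rdiv (a b : α) : neg (a * b) = rdiv (neg b) a :=
  eq_of_forall_le_iff fun z ↦ by
    rw [le_neg_iff, mul_assoc, mul_le_one_comm, mul_assoc, le_rdiv_iff, le_neg_iff]

theorem neg_ldiv (a b : α) : neg (ldiv a b) = rdiv (neg b) (neg a) := by
  have hle : neg a * (a * ldiv a b) ≤ ldiv a b := by
    rw [← mul_assoc]
    exact mul_le_of_le_one_left' (neg_mul_le_one a)
  calc
    neg (ldiv a b) = neg (neg a * (a * ldiv a b)) := (neg_eq_of_le hle).symm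
    _ = neg (neg a * b) := neg_eq_of_le (mul_le_mul_right (mul_ldiv_le a b) (neg a))
    _ = rdiv (neg b) (neg a) := neg_mul_eq_rdiv (neg a) b

theorem neg_rdiv (b a : α) : neg (rdiv b a) = ldiv (neg a) (neg b) := by
  have hle : rdiv b a * a * neg a ≤ rdiv b a := by
    rw [mul_assoc]
    exact mul_le_of_le_one_right' (mul_neg_le_one a)
  calc
    neg (rdiv b a) = neg (rdiv b a * a * neg a) := (neg_eq_of_le hle).symm
    _ = neg (b * neg a) := neg_eq_of_le (mul_le_mul_left (rdiv_mul_le b a) (neg a))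
    _ = ldiv (neg a) (neg b) := neg_mul_eq_ldiv b (neg a)

end Sirmonoid

/-- In any sirmonoid, `~(a\b) = ~b/~a` and `~(b/a) = ~a\~b`,
where `~a := a\e = e/a`. -/
theorem sirmonoid_not_ldiv_eq {α : Type*} [Sirmonoid α] :
    ∀ a b : α, ldiv (ldiv a b) 1 = rdiv (ldiv b 1) (ldiv a 1) ∧
      ldiv (rdiv b a) 1 = ldiv (ldiv a 1) (ldiv b 1) :=
  fun a b ↦ ⟨neg_ldiv a b, neg_rdiv b a⟩
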